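/- Suppose γ > 0 and β > 0. Then for every Floquet exponent ξ ∈ (0, 1/2] and every k > 0, the collision ω(−1+ξ) = ω(1+ξ) does NOT hold, where c₀ = γ/k² + βk² and ω(x) = k²·x·(c₀ − βk²x²) − γ/x. -/

import Mathlib

/-- Dispersion function of the linearized Ostrovsky equation,
with `c₀ = γ/k² + βk²` built in. -/
noncomputable def omega (γ β k x : ℝ) : ℝ :=
  k^2 * x * ((γ/k^2 + β*k^2) - β*k^2*x^2) - γ/x

/-!
The divided difference of `ω` at `x`, `y` is `γ(1 + 1/(xy)) + βk⁴(1 - x² - xy - y²)`. When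
`x - y = 2`, the identity `x² + xy + y² = 4 + 3xy` makes it factor as
`(1 + xy)(γ/(xy) - 3βk⁴)`. At `x = 1 + ξ`, `y = -1 + ξ` the first factor is `ξ²`, so a collision
forces `γ = 3βk⁴(ξ² - 1)`, which has the wrong sign for `|ξ| < 1`.
-/

theorem omega_sub_omega (γ β : ℝ) {k x y : ℝ} (hk : k ≠ 0) (hx : x ≠ 0) (hy : y ≠ 0) :
    omega γ β k x - omega γ β k y =
      (x - y) * (γ * (1 + 1 / (x * y)) + β * k^4 * (1 - (x^2 + x * y + y^2))) := by
  unfold omega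
  field_simp
  ring

theorem omega_sub_omega_of_sub_eq_two (γ β : ℝ) {k x y : ℝ} (hk : k ≠ 0) (hx : x ≠ 0)
    (hy : y ≠ 0) (hxy : x - y = 2) :
    omega γ β k x - omega γ β k y = 2 * (1 + x * y) * (γ / (x * y) - 3 * β * k^4) := by
  have hquad : x^2 + x * y + y^2 = 4 + 3 * (x * y) := by
    linear_combination (x - y + 2) * hxy
  rw [omega_sub_omega γ β hk hx hy, hxy, hquad]
  field_simp
  ring

theorem omega_neg_one_add_eq_omega_one_add_iff (γ β : ℝ) {k ξ : ℝ} (hk : k ≠ 0) (hξ : ξ ≠ 0)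
    (hneg : -1 + ξ ≠ 0) (hpos : 1 + ξ ≠ 0) :
    omega γ β k (-1 + ξ) = omega γ β k (1 + ξ) ↔ γ = 3 * β * k^4 * (ξ^2 - 1) := by
  have hprod : (1 + ξ) * (-1 + ξ) = ξ^2 - 1 := by ring
  have hprod_ne : ξ^2 - 1 ≠ 0 := hprod ▸ mul_ne_zero hpos hneg
  have hfactor : 2 * (1 + (ξ^2 - 1)) ≠ 0 := by simpa using hξ
  rw [eq_comm, ← sub_eq_zero, omega_sub_omega_of_sub_eq_two γ β hk hpos hneg (by ring), hprod,
    mul_eq_zero_iff_left hfactor, sub_eq_zero, div_eq_iff hprod_ne]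

theorem no_m11_collision_pos_beta_general {γ β k ξ : ℝ} (hγ : 0 < γ) (hβ : 0 ≤ β) (hk : k ≠ 0)
    (hξ : ξ ≠ 0) (hξ_lt : |ξ| < 1) :
    omega γ β k (-1 + ξ) ≠ omega γ β k (1 + ξ) := by
  obtain ⟨hlower, hupper⟩ := abs_lt.mp hξ_lt
  have hsq : ξ^2 - 1 ≤ 0 := sub_nonpos.mpr ((sq_lt_one_iff_abs_lt_one ξ).mpr hξ_lt).le
  have hnonpos : 3 * β * k^4 * (ξ^2 - 1) ≤ 0 :=
    mul_nonpos_of_nonneg_of_nonpos (by positivity) hsq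
  rw [Ne, omega_neg_one_add_eq_omega_one_add_iff γ β hk hξ (by linarith) (by linarith)]
  exact (hnonpos.trans_lt hγ).ne'

theorem no_m11_collision_pos_beta (γ β : ℝ) (hγ : 0 < γ) (hβ : 0 < β) :
    ∀ ξ k : ℝ, 0 < ξ → ξ ≤ 1/2 → 0 < k →
      omega γ β k (-1 + ξ) ≠ omega γ β k (1 + ξ) := fun _ _ hξ hξ_le hk =>
  no_m11_collision_pos_beta_general hγ hβ.le hk.ne' hξ.ne' (abs_lt.mpr ⟨by linarith, by linarith⟩)
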